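/- For every n ≥ 1 and every family A = (A^1, …, A^n) of complex I₁×I₂ matrices, the block Toeplitz-plus-Hankel matrix of A is block-diagonalized: (C_n ⊗ I_{I₁}) · btph(A) · (C_nᵀ ⊗ I_{I₂}) = blockdiag(Â^1, …, Â^n), where Â^p = ∑_{q=1}^n (M_n)_{p,q} A^q for each p. -/

import Mathlib

open Matrix Kronecker

noncomputable section

/-- The discrete cosine transform (DCT) matrix `C_n`. -/
def dctMatrix (n : ℕ) : Matrix (Fin n) (Fin n) ℝ :=
  Matrix.of fun i j =>
    Real.sqrt ((2 - if (i : ℕ) = 0 then (1 : ℝ) else 0) / n) *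
      Real.cos ((i : ℕ) * (2 * (j : ℕ) + 1) * Real.pi / (2 * n))

/-- Toeplitz-plus-Hankel selector (0-based indexing). -/
def thSelect {m : ℕ} {β : Type*} [AddCommMonoid β] (B : Fin m → β) (i j : Fin m) : β :=
  B ⟨(((i : ℕ) : ℤ) - ((j : ℕ) : ℤ)).natAbs, by
      have hi := i.isLt; have hj := j.isLt; omega⟩ +
  (if h1 : (i : ℕ) + (j : ℕ) + 2 ≤ m then
      B ⟨(i : ℕ) + (j : ℕ) + 1, by omega⟩
   else if h2 : (i : ℕ) + (j : ℕ) + 2 = m + 1 then 0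
   else
      B ⟨2 * m - 1 - ((i : ℕ) + (j : ℕ)), by
        have hi := i.isLt; have hj := j.isLt; omega⟩)

/-- The block Toeplitz-plus-Hankel matrix `btph(A)` of a family `A = (A^1, …, A^n)`
of complex `I₁×I₂` matrices. -/
def btph {n I₁ I₂ : ℕ} (A : Fin n → Matrix (Fin I₁) (Fin I₂) ℂ) :
    Matrix (Fin n × Fin I₁) (Fin n × Fin I₂) ℂ :=
  Matrix.of fun p q => thSelect A p.1 q.1 p.2 q.2

/-- `W_n`: the diagonal matrix whose diagonal is the first column of `C_n`. -/
def Wmat (n : ℕ) : Matrix (Fin n) (Fin n) ℝ :=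
  Matrix.diagonal fun i => dctMatrix n i ⟨0, i.pos⟩

/-- `Z_n`: the upshift matrix. -/
def Zmat (n : ℕ) : Matrix (Fin n) (Fin n) ℝ :=
  Matrix.of fun i j => if (i : ℕ) + 1 = (j : ℕ) then 1 else 0

/-- `M_n = W_n⁻¹ C_n (I_n + Z_n)`. -/
def Mmat (n : ℕ) : Matrix (Fin n) (Fin n) ℝ :=
  (Wmat n)⁻¹ * dctMatrix n * (1 + Zmat n)

/-! The rows of `C_n` are samples `c 0, …, c (n - 1)` of cosines `c : ℤ → ℝ` which are even about
the half-integers `-1/2` and `n - 1/2`. In a Toeplitz-plus-Hankel matrix the Hankel part folds the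
entries of the Toeplitz part which fall outside `[0, n)` back by reflection in these two points, so
slice `r ≠ 0` sends `c` to `j ↦ c (j + r) + c (j - r)` and slice `0` is the identity. Cosines are
eigenvectors of these operators, and the rows of `C_n` are orthonormal. The eigenvalues are read off
from the first columns: the first column of slice `r` is column `r` of `I + Z`, so dividing
`C_n (I + Z)` by the first column `W` of `C_n` gives them, and they are the entries of `M_n`. -/

section ToeplitzPlusHankel

variable {n : ℕ}

/-- The `r`-th slice of the Toeplitz-plus-Hankel structure: the Toeplitz-plus-Hankel matrix of the
family which is `1` at `r` and `0` elsewhere. These matrices span the scalar Toeplitz-plus-Hankel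
matrices. -/
def thBasis (R : Type*) [Semiring R] (r : Fin n) : Matrix (Fin n) (Fin n) R :=
  Matrix.of (thSelect (Pi.single r 1))

lemma thSelect_eq_sum_thBasis_smul (R : Type*) {β : Type*} [Semiring R] [AddCommMonoid β]
    [Module R β] (B : Fin n → β) (i j : Fin n) :
    thSelect B i j = ∑ r, thBasis R r i j • B r := by
  simp only [thBasis, of_apply, thSelect, add_smul, Finset.sum_add_distrib]
  split_ifs <;> simp [Pi.single_apply, ite_smul]

/-- The point `j + r`, reflected about `n - 1/2` if it lies beyond `n - 1`. -/
def reflectAdd (j r : Fin n) : Fin n :=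
  ⟨if (j : ℕ) + r < n then j + r else 2 * n - 1 - (j + r), by split_ifs <;> omega⟩

/-- The point `j - r`, reflected about `-1/2` if it is negative. -/
def reflectSub (j r : Fin n) : Fin n :=
  ⟨if r ≤ j then j - r else r - j - 1, by split_ifs <;> omega⟩

lemma thBasis_apply_of_val_ne_zero {R : Type*} [Semiring R] {r : Fin n} (hr : (r : ℕ) ≠ 0)
    (i j : Fin n) :
    thBasis R r i j =
      (if i = reflectAdd j r then 1 else 0) + if i = reflectSub j r then 1 else 0 := by
  simp only [thBasis, of_apply, thSelect, Pi.single_apply, reflectAdd, reflectSub, Fin.ext_iff,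
    Fin.le_def]
  split_ifs <;> first | omega | simp

lemma thBasis_of_val_eq_zero {R : Type*} [Semiring R] {r : Fin n} (hr : (r : ℕ) = 0) :
    thBasis R r = 1 := by
  ext i j
  simp only [thBasis, of_apply, thSelect, Pi.single_apply, one_apply, Fin.ext_iff]
  split_ifs <;> first | omega | simp

lemma sum_mul_thBasis {R : Type*} [Semiring R] {c : ℤ → R} (hleft : ∀ k, c (-1 - k) = c k)
    (hright : ∀ k, c (2 * n - 1 - k) = c k) (r j : Fin n) :
    ∑ i : Fin n, c i * thBasis R r i j = if (r : ℕ) = 0 then c j else c (j + r) + c (j - r) := by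
  have apply_reflectAdd : c (reflectAdd j r : ℕ) = c (j + r) := by
    by_cases h : (j : ℕ) + r < n
    · simp [reflectAdd, h]
    · rw [← hright]
      congr 1
      simp only [reflectAdd, h, if_false]
      omega
  have apply_reflectSub : c (reflectSub j r : ℕ) = c (j - r) := by
    by_cases h : r ≤ j
    · simp [reflectSub, h]
    · rw [← hleft]
      congr 1
      simp only [reflectSub, h, if_false]
      omega
  split_ifs with hr
  · simp [thBasis_of_val_eq_zero hr, one_apply]
  · simp [thBasis_apply_of_val_ne_zero hr, mul_add, Finset.sum_add_distrib, apply_reflectAdd,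
      apply_reflectSub]

lemma one_add_Zmat_apply (i r : Fin n) :
    (1 + Zmat n) i r = thBasis ℝ r i ⟨0, r.pos⟩ := by
  simp only [Matrix.add_apply, one_apply, Zmat, thBasis, of_apply, thSelect, Pi.single_apply,
    Fin.ext_iff]
  split_ifs <;> first | omega | simp

end ToeplitzPlusHankel

lemma two_mul_sin_mul_sum_cos (n : ℕ) (x : ℝ) :
    2 * Real.sin x * ∑ j ∈ Finset.range n, Real.cos ((2 * j + 1) * x) = Real.sin (2 * n * x) := by
  have telescope (j : ℕ) : 2 * Real.sin x * Real.cos ((2 * j + 1) * x) =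
      Real.sin (2 * (j + 1 : ℕ) * x) - Real.sin (2 * j * x) := by
    rw [Real.two_mul_sin_mul_cos, ← neg_sub ((2 * j + 1) * x), Real.sin_neg, neg_add_eq_sub]
    push_cast
    ring_nf
  simp only [Finset.mul_sum, telescope,
    Finset.sum_range_sub fun j : ℕ => Real.sin (2 * j * x)]
  simp

section CosineSamples

variable {n : ℕ}

/-- The cosine `cos (p (2k + 1) π / (2n))` of frequency `p` sampled at `k`. For `0 ≤ p, k < n` it is
the entry `(p, k)` of the DCT matrix up to normalization of the rows; integer arguments make room
for reflected samples and for sums and differences of frequencies. -/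
def dctCos (n : ℕ) (p k : ℤ) : ℝ :=
  Real.cos (p * (2 * k + 1) * Real.pi / (2 * n))

lemma dctCos_zero_left (k : ℤ) : dctCos n 0 k = 1 := by
  simp [dctCos]

lemma dctCos_neg_one_sub (p k : ℤ) : dctCos n p (-1 - k) = dctCos n p k := by
  rw [dctCos, dctCos, ← Real.cos_neg]
  push_cast
  ring_nf

lemma dctCos_two_mul_sub_one_sub (hn : n ≠ 0) (p k : ℤ) :
    dctCos n p (2 * n - 1 - k) = dctCos n p k := by
  rw [dctCos, dctCos, ← Real.cos_int_mul_two_pi_sub _ p]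
  congr 1
  push_cast
  field

lemma dctCos_add_add_dctCos_sub (p j r : ℤ) :
    dctCos n p (j + r) + dctCos n p (j - r) =
      2 * Real.cos (p * r * Real.pi / n) * dctCos n p j := by
  have angle : (p * r * Real.pi / n : ℝ) = p * (2 * r) * Real.pi / (2 * n) := by
    rw [← mul_div_mul_left _ _ (two_ne_zero' ℝ)]
    ring
  rw [mul_right_comm, dctCos, dctCos, dctCos, angle, Real.two_mul_cos_mul_cos, add_comm]
  push_cast
  ring_nf

lemma two_mul_dctCos_mul_dctCos (p q k : ℤ) :
    2 * dctCos n p k * dctCos n q k = dctCos n (p - q) k + dctCos n (p + q) k := by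
  simp only [dctCos, Real.two_mul_cos_mul_cos]
  push_cast
  ring_nf

lemma dctCos_zero_right_pos (p : Fin n) : 0 < dctCos n p 0 := by
  have hn : (0 : ℝ) < n := mod_cast p.pos
  have hp : ((p : ℕ) : ℝ) < n := mod_cast p.isLt
  refine Real.cos_pos_of_mem_Ioo ⟨(neg_lt_zero.2 Real.pi_div_two_pos).trans_le (by positivity), ?_⟩
  calc (((p : ℕ) : ℤ) * (2 * (0 : ℤ) + 1) * Real.pi / (2 * n) : ℝ)
      = (p : ℕ) / n * (Real.pi / 2) := by push_cast; ring
    _ < Real.pi / 2 := mul_lt_of_lt_one_left Real.pi_div_two_pos ((div_lt_one hn).2 hp)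

lemma sum_dctCos_eq_zero {m : ℤ} (hm : ¬ (2 * n : ℤ) ∣ m) : ∑ j : Fin n, dctCos n m j = 0 := by
  rcases eq_or_ne n 0 with rfl | hn
  · simp
  set x : ℝ := m * Real.pi / (2 * n) with hx
  have sin_ne_zero : Real.sin x ≠ 0 := by
    rw [Real.sin_ne_zero_iff]
    intro k hk
    refine hm ⟨k, ?_⟩
    rw [hx] at hk
    field_simp at hk
    rw [mul_assoc, mul_comm] at hk
    exact_mod_cast hk.symm
  have sum_eq : ∑ j : Fin n, dctCos n m j = ∑ j ∈ Finset.range n, Real.cos ((2 * j + 1) * x) := by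
    rw [← Fin.sum_univ_eq_sum_range fun j => Real.cos ((2 * j + 1) * x)]
    refine Finset.sum_congr rfl fun j _ => congrArg Real.cos ?_
    rw [hx]
    push_cast
    ring
  have sin_end : Real.sin (2 * n * x) = 0 := by
    rw [hx, mul_div_cancel₀ _ (by positivity), Real.sin_int_mul_pi]
  have := two_mul_sin_mul_sum_cos n x
  rw [sin_end, ← sum_eq] at this
  simpa [sin_ne_zero] using this

lemma sum_dctCos_mul_dctCos (p q : Fin n) :
    ∑ j : Fin n, dctCos n p j * dctCos n q j =
      if p = q then (n : ℝ) / (2 - if (p : ℕ) = 0 then 1 else 0) else 0 := by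
  have sum_add : (p : ℕ) ≠ 0 ∨ (q : ℕ) ≠ 0 → ∑ j : Fin n, dctCos n (p + q) j = 0 := fun h =>
    sum_dctCos_eq_zero fun hdvd => absurd (Int.le_of_dvd (by omega) hdvd) (by omega)
  have sum_sub : p ≠ q → ∑ j : Fin n, dctCos n (p - q) j = 0 := fun h =>
    sum_dctCos_eq_zero fun hdvd =>
      h (Fin.ext (by have := Int.eq_zero_of_abs_lt_dvd hdvd (by rw [abs_lt]; omega); omega))
  have two_mul_sum : 2 * ∑ j : Fin n, dctCos n p j * dctCos n q j =
      ∑ j : Fin n, dctCos n (p - q) j + ∑ j : Fin n, dctCos n (p + q) j := by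
    simp only [Finset.mul_sum, ← mul_assoc, two_mul_dctCos_mul_dctCos, Finset.sum_add_distrib]
  split_ifs with hpq hp
  · simp only [← hpq, hp, Nat.cast_zero, dctCos_zero_left, mul_one, Finset.sum_const,
      Finset.card_univ, Fintype.card_fin, nsmul_eq_mul]
    norm_num
  · subst hpq
    simp only [sum_add (.inl hp), sub_self, dctCos_zero_left, Finset.sum_const, Finset.card_univ,
      Fintype.card_fin, nsmul_eq_mul, mul_one, add_zero] at two_mul_sum
    linarith
  · rw [sum_sub hpq, sum_add (by omega)] at two_mul_sum
    linarith

end CosineSamples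

section DCT

variable {n : ℕ}

/-- The factor normalizing row `i` of the DCT matrix: `√(1/n)` for the first row `i = 0`, and
`√(2/n)` for the others. -/
def dctScale (n i : ℕ) : ℝ :=
  Real.sqrt ((2 - if i = 0 then 1 else 0) / n)

lemma dctScale_pos (hn : n ≠ 0) (i : ℕ) : 0 < dctScale n i := by
  have : (0 : ℝ) < 2 - if i = 0 then 1 else 0 := by split_ifs <;> norm_num
  exact Real.sqrt_pos.2 (by positivity)

lemma dctScale_mul_self (n i : ℕ) :
    dctScale n i * dctScale n i = (2 - if i = 0 then 1 else 0) / n :=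
  Real.mul_self_sqrt (by split_ifs <;> positivity)

lemma dctMatrix_apply (i j : Fin n) : dctMatrix n i j = dctScale n i * dctCos n i j := by
  simp [dctMatrix, dctScale, dctCos]

lemma dctMatrix_mul_transpose (n : ℕ) : dctMatrix n * (dctMatrix n)ᵀ = 1 := by
  ext p q
  have hn : (n : ℝ) ≠ 0 := mod_cast p.pos.ne'
  simp only [mul_apply, transpose_apply, dctMatrix_apply, mul_mul_mul_comm, ← Finset.mul_sum,
    sum_dctCos_mul_dctCos, one_apply]
  rcases eq_or_ne p q with rfl | hpq
  · simp only [dctScale_mul_self, if_true]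
    split_ifs <;> field_simp
  · simp only [hpq, if_false, mul_zero]

/-- The entry `(p, r)` is the eigenvalue of the slice `thBasis ℝ r` on row `p` of the DCT matrix. -/
def dctEigenvalue (n : ℕ) : Matrix (Fin n) (Fin n) ℝ :=
  Matrix.of fun p r => if (r : ℕ) = 0 then 1 else 2 * Real.cos (p * r * Real.pi / n)

lemma dctMatrix_mul_thBasis (r : Fin n) :
    dctMatrix n * thBasis ℝ r = diagonal (fun p => dctEigenvalue n p r) * dctMatrix n := by
  ext p j
  have reflect := sum_mul_thBasis (dctCos_neg_one_sub p)
    (dctCos_two_mul_sub_one_sub p.pos.ne' p) r j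
  have product := dctCos_add_add_dctCos_sub (n := n) p j r
  rw [diagonal_mul]
  simp only [mul_apply, dctMatrix_apply, mul_assoc, ← Finset.mul_sum, reflect, product,
    dctEigenvalue, of_apply]
  split_ifs
  · ring
  · push_cast
    ring

lemma isUnit_det_Wmat (n : ℕ) : IsUnit (Wmat n).det := by
  simp only [Wmat, det_diagonal, isUnit_iff_ne_zero, Finset.prod_ne_zero_iff]
  intro i _
  rw [dctMatrix_apply]
  exact (mul_pos (dctScale_pos i.pos.ne' i) (dctCos_zero_right_pos i)).ne'

lemma dctMatrix_mul_one_add_Zmat (n : ℕ) :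
    dctMatrix n * (1 + Zmat n) = Wmat n * dctEigenvalue n := by
  ext p r
  calc (dctMatrix n * (1 + Zmat n)) p r = (dctMatrix n * thBasis ℝ r) p ⟨0, r.pos⟩ := by
        simp only [mul_apply, one_add_Zmat_apply]
    _ = (Wmat n * dctEigenvalue n) p r := by
        rw [dctMatrix_mul_thBasis, diagonal_mul, Wmat, diagonal_mul, mul_comm]

lemma Mmat_eq_dctEigenvalue (n : ℕ) : Mmat n = dctEigenvalue n := by
  rw [Mmat, Matrix.mul_assoc, dctMatrix_mul_one_add_Zmat,
    nonsing_inv_mul_cancel_left _ _ (isUnit_det_Wmat n)]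

lemma dctMatrix_mul_thBasis_mul_transpose (r : Fin n) :
    dctMatrix n * thBasis ℝ r * (dctMatrix n)ᵀ = diagonal fun p => Mmat n p r := by
  rw [dctMatrix_mul_thBasis, Matrix.mul_assoc, dctMatrix_mul_transpose, Matrix.mul_one,
    Mmat_eq_dctEigenvalue]

lemma sum_dctMatrix_smul_thSelect {β : Type*} [AddCommMonoid β] [Module ℝ β] (B : Fin n → β)
    (p q : Fin n) :
    ∑ i, ∑ j, (dctMatrix n p i * dctMatrix n q j) • thSelect B i j =
      if p = q then ∑ r, Mmat n p r • B r else 0 := by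
  calc ∑ i, ∑ j, (dctMatrix n p i * dctMatrix n q j) • thSelect B i j
      = ∑ r, (dctMatrix n * (thBasis ℝ r * (dctMatrix n)ᵀ)) p q • B r := by
        simp only [thSelect_eq_sum_thBasis_smul ℝ B, mul_apply, transpose_apply,
          Finset.smul_sum, Finset.sum_smul, Finset.mul_sum, smul_smul, mul_assoc,
          mul_comm (dctMatrix n q _)]
        exact Finset.sum_comm_cycle
    _ = if p = q then ∑ r, Mmat n p r • B r else 0 := by
        simp only [← Matrix.mul_assoc, dctMatrix_mul_thBasis_mul_transpose, diagonal_apply]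
        split_ifs <;> simp

end DCT

lemma kronecker_one_mul_mul_kronecker_one_apply {R l m n o s t : Type*} [Semiring R] [Fintype m]
    [Fintype n] [Fintype s] [Fintype t] [DecidableEq s] [DecidableEq t] (P : Matrix l m R)
    (X : Matrix (m × s) (n × t) R) (Q : Matrix n o R) (p : l × s) (q : o × t) :
    ((P ⊗ₖ (1 : Matrix s s R)) * X * (Q ⊗ₖ (1 : Matrix t t R))) p q =
      ∑ i, ∑ j, P p.1 i * X (i, p.2) (j, q.2) * Q j q.1 := by
  simp only [mul_apply, Fintype.sum_prod_type, kroneckerMap_apply, one_apply, mul_ite, mul_one,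
    mul_zero, ite_mul, zero_mul, Finset.sum_ite_eq, Finset.sum_ite_eq', Finset.mem_univ, if_true,
    Finset.sum_mul]
  exact Finset.sum_comm

/-- For every `n ≥ 1` and family `A = (A^1, …, A^n)` of complex `I₁×I₂` matrices:
`(C_n ⊗ I_{I₁}) btph(A) (C_nᵀ ⊗ I_{I₂}) = blockdiag(Â^1, …, Â^n)`,
where `Â^p = ∑_q (M_n)_{p,q} A^q`. -/
theorem dct_block_diagonalizes_btph (n I₁ I₂ : ℕ) (hn : 1 ≤ n)
    (A : Fin n → Matrix (Fin I₁) (Fin I₂) ℂ) :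
    ((dctMatrix n).map (Complex.ofReal) ⊗ₖ (1 : Matrix (Fin I₁) (Fin I₁) ℂ)) * btph A *
        (((dctMatrix n).map (Complex.ofReal))ᵀ ⊗ₖ (1 : Matrix (Fin I₂) (Fin I₂) ℂ))
      = Matrix.of fun p q =>
          if p.1 = q.1 then (∑ r, (((Mmat n) p.1 r : ℝ) : ℂ) • A r) p.2 q.2 else 0 := by
  ext ⟨p, a⟩ ⟨q, b⟩
  calc _ = (∑ i, ∑ j, (dctMatrix n p i * dctMatrix n q j) • thSelect A i j) a b := by
        rw [kronecker_one_mul_mul_kronecker_one_apply]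
        simp [btph, Matrix.sum_apply, mul_right_comm]
    _ = _ := by
        rw [sum_dctMatrix_smul_thSelect]
        split_ifs <;> simp [Matrix.sum_apply, *]
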